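/- If a map M admits a J-coloring, then for every I ⊆ {0,1,2} the I-double I≻M is isomorphic to the (IΔJ)-double (IΔJ)≻M; that is, there exists a bijection ψ : Ω×ℤ/2ℤ → Ω×ℤ/2ℤ satisfying ψ(x·tⱼ) = ψ(x)·t′ⱼ for all x and all j ∈ {0,1,2}, where (t₀,t₁,t₂) and (t′₀,t′₁,t′₂) are the connections of I≻M and (IΔJ)≻M respectively. -/

import Mathlib

/-- A (combinatorial) map: a nonempty set of flags `Ω` together with three
permutations `r 0, r 1, r 2` which are fixed-point-free involutions, such that
`r 0` and `r 2` commute with fixed-point-free product, and such that the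
connection group `⟨r 0, r 1, r 2⟩` acts transitively on `Ω`. -/
structure CMap (Ω : Type) where
  r : Fin 3 → Equiv.Perm Ω
  nonempty : Nonempty Ω
  invol : ∀ (i : Fin 3) (f : Ω), r i (r i f) = f
  fpf : ∀ (i : Fin 3) (f : Ω), r i f ≠ f
  comm02 : ∀ f : Ω, r 0 (r 2 f) = r 2 (r 0 f)
  fpf02 : ∀ f : Ω, r 0 (r 2 f) ≠ f
  flag_transitive : ∀ f g : Ω,
    ∃ w ∈ Subgroup.closure ({r 0, r 1, r 2} : Set (Equiv.Perm Ω)), w f = g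

/-- `a` is an `I`-coloring with respect to the connections `r`. -/
def IsColoringOn {Ω : Type} (r : Fin 3 → Ω → Ω) (I : Set (Fin 3)) (a : Ω → ZMod 2) : Prop :=
  ∀ (f : Ω) (j : Fin 3), (j ∈ I → a (r j f) = a f + 1) ∧ (j ∉ I → a (r j f) = a f)

/-- There exists an `I`-coloring with respect to the connections `r`. -/
def ColorableOn {Ω : Type} (r : Fin 3 → Ω → Ω) (I : Set (Fin 3)) : Prop :=
  ∃ a : Ω → ZMod 2, IsColoringOn r I a

/-- `a` is an `I`-coloring of the map `M`. -/
def CMap.IsColoring {Ω : Type} (M : CMap Ω) (I : Set (Fin 3)) (a : Ω → ZMod 2) : Prop :=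
  IsColoringOn (fun j f => M.r j f) I a

/-- The map `M` admits an `I`-coloring. -/
def CMap.Colorable {Ω : Type} (M : CMap Ω) (I : Set (Fin 3)) : Prop :=
  ∃ a : Ω → ZMod 2, M.IsColoring I a

/-- `T M` is the collection of subsets `I ⊆ {0,1,2}` for which `M` is `I`-colorable. -/
def CMap.T {Ω : Type} (M : CMap Ω) : Set (Set (Fin 3)) :=
  {I | M.Colorable I}

open Classical in
/-- The `j`-th connection of the `I`-double `I ≻ M` on `Ω × ℤ/2ℤ`:
`(f,i)·tⱼ = (f·rⱼ, i)` if `j ∉ I` and `(f,i)·tⱼ = (f·rⱼ, i+1)` if `j ∈ I`. -/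
noncomputable def dblPerm {Ω : Type} (M : CMap Ω) (I : Set (Fin 3)) (j : Fin 3) :
    Equiv.Perm (Ω × ZMod 2) :=
  (M.r j).prodCongr (Equiv.addRight (if j ∈ I then (1 : ZMod 2) else 0))

/-- The bijection of `Ω × A` that translates the fibre over each flag `f` by `a f`. For a
`J`-coloring `a` it carries the `I`-double of a map onto its `(I Δ J)`-double. -/
def fiberTranslate {Ω A : Type*} [AddGroup A] (a : Ω → A) : Ω × A ≃ Ω × A :=
  (Equiv.refl Ω).prodShear fun f => Equiv.addRight (a f)

theorem fiberTranslate_semiconj {Ω A : Type*} [AddCommGroup A] {r : Ω → Ω} {a : Ω → A} {d : A}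
    (ha : ∀ f, a (r f) = a f + d) (c : A) :
    Function.Semiconj (fiberTranslate a) (Prod.map r (· + c)) (Prod.map r (· + (c + d))) := by
  rintro ⟨f, i⟩
  have fiber_eq : i + c + a (r f) = i + a f + (c + d) := by
    rw [ha f, add_add_add_comm]
  exact Prod.ext rfl fiber_eq

theorem indicator_one_symmDiff_apply {ι R : Type*} [Semiring R] [CharP R 2] (I J : Set ι) (j : ι) :
    (symmDiff I J).indicator (1 : ι → R) j = I.indicator 1 j + J.indicator 1 j := by
  by_cases hI : j ∈ I <;> by_cases hJ : j ∈ J <;>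
    simp [Set.mem_symmDiff, hI, hJ, CharTwo.add_self_eq_zero]

theorem isColoringOn_iff_indicator {Ω : Type} {r : Fin 3 → Ω → Ω} {I : Set (Fin 3)}
    {a : Ω → ZMod 2} :
    IsColoringOn r I a ↔ ∀ f j, a (r j f) = a f + I.indicator 1 j := by
  refine forall₂_congr fun f j => ?_
  by_cases hj : j ∈ I <;> simp [hj]

theorem dblPerm_apply {Ω : Type} (M : CMap Ω) (I : Set (Fin 3)) (j : Fin 3) (x : Ω × ZMod 2) :
    dblPerm M I j x = Prod.map (M.r j) (· + I.indicator 1 j) x := by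
  classical
  simp [dblPerm, Set.indicator_apply]

theorem double_iso_of_colorable_general {ι Ω R : Type*} [Ring R] [CharP R 2] (r : ι → Ω → Ω)
    (J : Set ι) (hJ : ∃ a : Ω → R, ∀ f j, a (r j f) = a f + J.indicator 1 j) (I : Set ι) :
    ∃ ψ : (Ω × R) ≃ (Ω × R), ∀ (x : Ω × R) (j : ι),
      ψ (Prod.map (r j) (· + I.indicator 1 j) x) =
        Prod.map (r j) (· + (symmDiff I J).indicator 1 j) (ψ x) := by
  obtain ⟨a, ha⟩ := hJ
  refine ⟨fiberTranslate a, fun x j => ?_⟩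
  rw [indicator_one_symmDiff_apply]
  exact fiberTranslate_semiconj (fun f => ha f j) (I.indicator 1 j) x

/-- if `M` admits a `J`-coloring, then for every `I` the doubles
`I ≻ M` and `(I Δ J) ≻ M` are isomorphic. -/
theorem double_iso_of_colorable {Ω : Type} (M : CMap Ω) (J : Set (Fin 3))
    (hJ : M.Colorable J) (I : Set (Fin 3)) :
    ∃ ψ : (Ω × ZMod 2) ≃ (Ω × ZMod 2),
      ∀ (x : Ω × ZMod 2) (j : Fin 3),
        ψ (dblPerm M I j x) = dblPerm M (symmDiff I J) j (ψ x) := by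
  simpa only [dblPerm_apply] using double_iso_of_colorable_general (fun j => M.r j) J
    (hJ.imp fun _ => isColoringOn_iff_indicator.mp) I
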